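/- arXiv:1511.08746 — 3 statements merged into one kernel-verified Lean document; each statement's English description precedes it below -/
import Mathlib

section
/- Let H be a real m×n matrix and let k ≥ 1 be a natural number. Then the following are equivalent: (i) for every measurement vector y ∈ ℝ^m there is at most one k-sparse vector s ∈ ℝ^n with y = H s (equivalently, whenever s₁ and s₂ are k-sparse and H s₁ = H s₂, then s₁ = s₂); (ii) spark(H) > 2k, i.e., every nonempty set of at most 2k columns of H is linearly independent. -/
/-- The ℓ0-"norm": number of nonzero entries of a vector. -/
noncomputable def l0 {n : ℕ} (s : Fin n → ℝ) : ℕ := (Finset.univ.filter (fun i => s i ≠ 0)).card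

/- A vector has at most `2k` nonzero entries exactly when it is the difference of two `k`-sparse
vectors. Hence a linear map is injective on `k`-sparse vectors iff its kernel contains no nonzero
`2k`-sparse vector, and a kernel vector is the same thing as a linear relation among the columns
in its support. -/

theorem card_support_le_add_iff_exists_eq_sub {ι G : Type*} [AddCommGroup G] {f : ι →₀ G}
    {a b : ℕ} :
    f.support.card ≤ a + b ↔
      ∃ s t : ι →₀ G, s.support.card ≤ a ∧ t.support.card ≤ b ∧ f = s - t := by
  classical
  constructor
  · intro hf
    obtain ⟨U, hUf, hU⟩ := Finset.exists_subset_card_eq (min_le_right a f.support.card)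
    have hfU : (f.filter (· ∈ U)).support.card ≤ a := by
      rw [Finsupp.support_filter, Finset.filter_mem_eq_inter, Finset.inter_eq_right.2 hUf]
      omega
    have hfUc : (f.filter (· ∉ U)).support.card ≤ b := by
      rw [Finsupp.support_filter, Finset.filter_notMem_eq_sdiff, Finset.card_sdiff_of_subset hUf]
      omega
    refine ⟨f.filter (· ∈ U), -f.filter (· ∉ U), hfU, ?_, ?_⟩
    · rwa [Finsupp.support_neg]
    · rw [sub_neg_eq_add, Finsupp.filter_add_filter_not]
  · rintro ⟨s, t, hs, ht, rfl⟩
    calc (s - t).support.card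
        ≤ (s.support ∪ t.support).card := Finset.card_le_card Finsupp.support_sub
      _ ≤ s.support.card + t.support.card := Finset.card_union_le _ _
      _ ≤ a + b := Nat.add_le_add hs ht

theorem injOn_card_support_le_iff {ι G A : Type*} [AddCommGroup G] [AddGroup A]
    (φ : (ι →₀ G) →+ A) (k : ℕ) :
    Set.InjOn φ {s | s.support.card ≤ k} ↔
      ∀ f : ι →₀ G, f.support.card ≤ 2 * k → φ f = 0 → f = 0 := by
  simp only [two_mul, card_support_le_add_iff_exists_eq_sub]
  constructor
  · rintro hφ _ ⟨s, t, hs, ht, rfl⟩ hst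
    rw [map_sub, sub_eq_zero] at hst
    exact sub_eq_zero.2 (hφ hs ht hst)
  · intro hφ s hs t ht hst
    exact sub_eq_zero.1 (hφ (s - t) ⟨s, t, hs, ht, rfl⟩ (by rw [map_sub, hst, sub_self]))

theorem forall_card_le_linearIndepOn_iff {ι R M : Type*} [Ring R] [AddCommGroup M] [Module R M]
    (v : ι → M) (d : ℕ) :
    (∀ T : Finset ι, T.Nonempty → T.card ≤ d → LinearIndepOn R v (T : Set ι)) ↔
      ∀ f : ι →₀ R, f.support.card ≤ d → Finsupp.linearCombination R v f = 0 → f = 0 := by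
  constructor
  · intro hv f hf hf0
    by_contra hne
    exact hne <| linearIndepOn_iff.1 (hv f.support (Finsupp.support_nonempty_iff.2 hne) hf) f
      (Finsupp.mem_supported_support R f) hf0
  · intro hv T _ hT
    refine linearIndepOn_iff.2 fun f hfT ↦ hv f ?_
    exact (Finset.card_le_card (Finset.coe_subset.1 hfT)).trans hT

theorem sparse_uniqueness_iff_spark_gt_two_k_general {ι R M : Type*} [Ring R] [AddCommGroup M]
    [Module R M] (v : ι → M) (k : ℕ) :
    Set.InjOn (Finsupp.linearCombination R v) {s | s.support.card ≤ k} ↔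
      ∀ T : Finset ι, T.Nonempty → T.card ≤ 2 * k → LinearIndepOn R v (T : Set ι) :=
  (injOn_card_support_le_iff (Finsupp.linearCombination R v).toAddMonoidHom k).trans
    (forall_card_le_linearIndepOn_iff v (2 * k)).symm

theorem l0_coe_finsupp {n : ℕ} (s : Fin n →₀ ℝ) : l0 s = s.support.card :=
  congrArg Finset.card (by ext; simp)

theorem mulVec_coe_finsupp {m n R : Type*} [Fintype n] [CommSemiring R] (H : Matrix m n R)
    (s : n →₀ R) : H.mulVec s = Finsupp.linearCombination R H.col s := by
  ext i
  simp [Matrix.mulVec_eq_sum, Finsupp.linearCombination_apply, Finsupp.sum_fintype]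

theorem sparse_mulVec_injective_iff_injOn_linearCombination {m : Type*} {n : ℕ}
    (H : Matrix m (Fin n) ℝ) (k : ℕ) :
    (∀ s₁ s₂ : Fin n → ℝ, l0 s₁ ≤ k → l0 s₂ ≤ k → H.mulVec s₁ = H.mulVec s₂ → s₁ = s₂) ↔
      Set.InjOn (Finsupp.linearCombination ℝ H.col) {s | s.support.card ≤ k} := by
  constructor
  · intro h s hs t ht hst
    refine DFunLike.coe_injective (h s t ?_ ?_ ?_)
    · rwa [l0_coe_finsupp]
    · rwa [l0_coe_finsupp]
    · rwa [mulVec_coe_finsupp, mulVec_coe_finsupp]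
  · intro h s₁ s₂ hs₁ hs₂ hst
    lift s₁ to Fin n →₀ ℝ using Set.toFinite _
    lift s₂ to Fin n →₀ ℝ using Set.toFinite _
    rw [l0_coe_finsupp] at hs₁ hs₂
    rw [mulVec_coe_finsupp, mulVec_coe_finsupp] at hst
    rw [h hs₁ hs₂ hst]

/-- For a real m×n matrix `H` and `k ≥ 1`, uniqueness of `k`-sparse solutions of
`y = H s` for every `y` is equivalent to `spark(H) > 2k`, i.e. every nonempty set
of at most `2k` columns of `H` is linearly independent. -/
theorem sparse_uniqueness_iff_spark_gt_two_k
    {m n : ℕ} (H : Matrix (Fin m) (Fin n) ℝ) (k : ℕ) (hk : 1 ≤ k) :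
    (∀ s₁ s₂ : Fin n → ℝ, l0 s₁ ≤ k → l0 s₂ ≤ k →
        H.mulVec s₁ = H.mulVec s₂ → s₁ = s₂) ↔
    (∀ T : Finset (Fin n), T.Nonempty → T.card ≤ 2 * k →
        LinearIndependent ℝ (fun i : T => H.transpose (i : Fin n))) :=
  (sparse_mulVec_injective_iff_injOn_linearCombination H k).trans
    (sparse_uniqueness_iff_spark_gt_two_k_general H.col k)
end

section
/- Let H be a real m×n matrix such that every set of at most m columns of H is linearly independent (i.e., spark(H) = m + 1). Then for every natural number k with 2k ≤ m and every y ∈ ℝ^m, there is at most one k-sparse vector s ∈ ℝ^n satisfying y = H s. -/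
section Spark

open Function

variable {R M ι : Type*} [Semiring R] [AddCommMonoid M] [Module R M]

variable (R) in
/-- The spark of a family of vectors: the least number of members that are linearly dependent,
with value `⊤` when every finite subfamily is linearly independent. Members are counted by index,
so a repeated vector is a dependent pair. The spark of a matrix `H` is `spark R H.col`. -/
noncomputable def spark (v : ι → M) : ℕ∞ :=
  ⨅ (T : Finset ι) (_ : ¬ LinearIndepOn R v (T : Set ι)), (T.card : ℕ∞)

theorem natCast_lt_spark_iff {v : ι → M} {r : ℕ} :
    (r : ℕ∞) < spark R v ↔ ∀ T : Finset ι, T.card ≤ r → LinearIndepOn R v (T : Set ι) := by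
  rw [← ENat.add_one_le_iff (ENat.natCast_ne_top r), spark, le_iInf₂_iff]
  refine forall_congr' fun T => ?_
  rw [not_imp_comm]
  norm_cast
  rw [Nat.succ_le_iff, not_lt]

variable [Fintype ι]

theorem eq_of_sum_smul_eq_of_support_subset {v : ι → M} {T : Finset ι}
    (hv : LinearIndepOn R v (T : Set ι)) {a b : ι → R} (ha : support a ⊆ T) (hb : support b ⊆ T)
    (hab : ∑ i, a i • v i = ∑ i, b i • v i) : a = b := by
  have sum_eq_sum_univ {c : ι → R} (hc : support c ⊆ T) :
      ∑ i ∈ T, c i • v i = ∑ i, c i • v i :=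
    Finset.sum_subset T.subset_univ fun i _ hi => by
      rw [notMem_support.mp (Set.notMem_subset hc hi), zero_smul]
  have eq_on : ∀ i ∈ T, a i = b i :=
    linearIndepOn_finset_iffₛ.mp hv a b <| by
      rw [sum_eq_sum_univ ha, sum_eq_sum_univ hb, hab]
  funext i
  by_cases hi : i ∈ T
  · exact eq_on i hi
  · rw [notMem_support.mp (Set.notMem_subset ha hi), notMem_support.mp (Set.notMem_subset hb hi)]

theorem eq_of_sum_smul_eq_of_hammingNorm_add_lt_spark [DecidableEq R] {v : ι → M} {a b : ι → R}
    (hspark : ((hammingNorm a + hammingNorm b : ℕ) : ℕ∞) < spark R v)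
    (hab : ∑ i, a i • v i = ∑ i, b i • v i) : a = b := by
  classical
  let A : Finset ι := {i | a i ≠ 0}
  let B : Finset ι := {i | b i ≠ 0}
  have hAB : LinearIndepOn R v (A ∪ B : Finset ι) :=
    natCast_lt_spark_iff.mp hspark (A ∪ B) (Finset.card_union_le A B)
  have ha : support a ⊆ (A ∪ B : Finset ι) := fun i hi =>
    Finset.mem_union_left B ((Finset.mem_filter_univ i).mpr hi)
  have hb : support b ⊆ (A ∪ B : Finset ι) := fun i hi =>
    Finset.mem_union_right A ((Finset.mem_filter_univ i).mpr hi)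
  exact eq_of_sum_smul_eq_of_support_subset hAB ha hb hab

end Spark

section Matrix

open Matrix

variable {R m n : Type*} [CommSemiring R] [Fintype n]

theorem mulVec_eq_sum_smul_col (H : Matrix m n R) (s : n → R) :
    H *ᵥ s = ∑ i, s i • H.col i := by
  simp only [mulVec_eq_sum, op_smul_eq_smul, col_def]

theorem spark_full_sparse_uniqueness_general [DecidableEq R] (H : Matrix m n R) {s₁ s₂ : n → R}
    (hspark : ((hammingNorm s₁ + hammingNorm s₂ : ℕ) : ℕ∞) < spark R H.col)
    (h : H *ᵥ s₁ = H *ᵥ s₂) : s₁ = s₂ :=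
  eq_of_sum_smul_eq_of_hammingNorm_add_lt_spark hspark <| by
    rwa [← mulVec_eq_sum_smul_col, ← mulVec_eq_sum_smul_col]

end Matrix

theorem l0_eq_hammingNorm {n : ℕ} (s : Fin n → ℝ) : l0 s = hammingNorm s := rfl

/-- If every set of at most `m` columns of `H` is linearly independent
(i.e. `spark(H) = m + 1`), then for every `k` with `2k ≤ m` and every `y`
there is at most one `k`-sparse solution of `y = H s`. -/
theorem spark_full_sparse_uniqueness
    {m n : ℕ} (H : Matrix (Fin m) (Fin n) ℝ)
    (hspark : ∀ T : Finset (Fin n), T.card ≤ m →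
      LinearIndependent ℝ (fun i : T => H.transpose (i : Fin n))) :
    ∀ k : ℕ, 2 * k ≤ m →
      ∀ s₁ s₂ : Fin n → ℝ, l0 s₁ ≤ k → l0 s₂ ≤ k →
        H.mulVec s₁ = H.mulVec s₂ → s₁ = s₂ := by
  intro k hk s₁ s₂ h₁ h₂
  rw [l0_eq_hammingNorm] at h₁ h₂
  exact spark_full_sparse_uniqueness_general H <|
    natCast_lt_spark_iff.mpr fun T hT => hspark T (by lia)
end

section
/- Let H be a real m×n matrix, k ≥ 1 a natural number, and δ a real number with 0 ≤ δ < √2 − 1. Suppose H satisfies the restricted isometry property of order 2k with constant δ, i.e., (1−δ)‖x‖₂² ≤ ‖H x‖₂² ≤ (1+δ)‖x‖₂² for every 2k-sparse x ∈ ℝ^n. Let s ∈ ℝ^n be k-sparse, set y = H s, and let s* be any minimizer of the ℓ1-norm ‖x‖₁ over the set {x ∈ ℝ^n : H x = y}. Then s* = s. -/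
open Matrix

/-!
Let `h = s* - s`. Minimality puts `h` in the cone `‖h_Sᶜ‖₁ ≤ ‖h_S‖₁`, where `S` is a set of `k`
coordinates supporting `s`. Let `B` hold the `k` largest entries of `h` outside `S`, and cut the
remaining coordinates, by decreasing modulus, into blocks `T` of size at most `k`. Each entry of a
block is at most the average over the preceding block, so
`∑ ‖h_T‖₂ ≤ ‖h_Sᶜ‖₁ / √k ≤ ‖h_S‖₁ / √k ≤ ‖h_S‖₂`. As `H h = 0`, the image of `h_{S ∪ B}` is minus
the sum of the images of the `h_T`, and the RIP makes images of disjointly supported vectors almost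
orthogonal. Hence
`(1 - δ) ‖h_{S ∪ B}‖² ≤ ‖H h_{S ∪ B}‖² ≤ δ (‖h_S‖ + ‖h_B‖) ‖h_S‖ ≤ √2 δ ‖h_{S ∪ B}‖²`,
and `δ < √2 - 1` forces `h_{S ∪ B} = 0`, whence `h = 0` by the cone condition.
-/

section

open Finset
open scoped InnerProductSpace

theorem exists_subset_card_eq_forall_sdiff_le {ι α : Type*} [DecidableEq ι] [LinearOrder α]
    (f : ι → α) {S : Finset ι} {k : ℕ} (hk : k ≤ #S) :
    ∃ T ⊆ S, #T = k ∧ ∀ i ∈ T, ∀ j ∈ S \ T, f j ≤ f i := by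
  induction k with
  | zero => exact ⟨∅, by simp⟩
  | succ k ih =>
    obtain ⟨T, hTS, hT, hle⟩ := ih (by omega)
    have hne : (S \ T).Nonempty := by
      rw [← card_pos, card_sdiff_of_subset hTS]
      omega
    obtain ⟨a, ha, hmax⟩ := exists_max_image (S \ T) f hne
    obtain ⟨haS, haT⟩ := mem_sdiff.1 ha
    refine ⟨insert a T, insert_subset haS hTS, by rw [card_insert_of_notMem haT, hT], ?_⟩
    intro i hi j hj
    have hj' : j ∈ S \ T := sdiff_subset_sdiff subset_rfl (subset_insert a T) hj
    rcases mem_insert.1 hi with rfl | hi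
    · exact hmax j hj'
    · exact hle i hi j hj'

theorem sum_compl_norm_sub_le_of_sum_norm_le {ι F : Type*} [Fintype ι] [DecidableEq ι]
    [SeminormedAddCommGroup F] {s x : ι → F} {S : Finset ι} (hs : ∀ i ∉ S, s i = 0)
    (hx : ∑ i, ‖x i‖ ≤ ∑ i, ‖s i‖) :
    ∑ i ∈ Sᶜ, ‖x i - s i‖ ≤ ∑ i ∈ S, ‖x i - s i‖ := by
  have hs_compl : ∑ i ∈ Sᶜ, ‖s i‖ = 0 :=
    sum_eq_zero fun i hi ↦ by rw [hs i (mem_compl.1 hi), norm_zero]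
  have hx_compl : ∑ i ∈ Sᶜ, ‖x i - s i‖ = ∑ i ∈ Sᶜ, ‖x i‖ :=
    sum_congr rfl fun i hi ↦ by rw [hs i (mem_compl.1 hi), sub_zero]
  have htriangle : ∑ i ∈ S, ‖s i‖ ≤ ∑ i ∈ S, ‖x i‖ + ∑ i ∈ S, ‖x i - s i‖ := by
    rw [← sum_add_distrib]
    exact sum_le_sum fun i _ ↦ norm_le_norm_add_norm_sub (x i) (s i)
  rw [← sum_add_sum_compl S, ← sum_add_sum_compl S (fun i ↦ ‖s i‖)] at hx
  linarith

theorem add_mul_self_le_sqrt_two_mul_sq_add_sq (a b : ℝ) : (a + b) * a ≤ √2 * (a ^ 2 + b ^ 2) := by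
  have hadd : |a + b| ≤ √2 * √(a ^ 2 + b ^ 2) := by
    rw [← Real.sqrt_mul zero_le_two]
    exact Real.abs_le_sqrt add_sq_le
  have hleft : |a| ≤ √(a ^ 2 + b ^ 2) := Real.abs_le_sqrt (le_add_of_nonneg_right (sq_nonneg b))
  calc (a + b) * a ≤ |a + b| * |a| := (le_abs_self _).trans_eq (abs_mul _ _)
    _ ≤ √2 * √(a ^ 2 + b ^ 2) * √(a ^ 2 + b ^ 2) := by gcongr
    _ = √2 * (a ^ 2 + b ^ 2) := by rw [mul_assoc, Real.mul_self_sqrt (by positivity)]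

variable {𝕜 ι E : Type*} [RCLike 𝕜]

/-- The vector `x_S` that agrees with `x` on `S` and vanishes off `S`. It stays in the space of `x`,
so that a linear map on that space applies to it. -/
noncomputable def restrictCoords (S : Finset ι) (x : EuclideanSpace 𝕜 ι) : EuclideanSpace 𝕜 ι :=
  WithLp.toLp 2 ((S : Set ι).indicator x)

theorem restrictCoords_apply_of_mem {S : Finset ι} {i : ι} (hi : i ∈ S)
    (x : EuclideanSpace 𝕜 ι) : restrictCoords S x i = x i :=
  Set.indicator_of_mem (mem_coe.2 hi) _

theorem restrictCoords_apply_of_notMem {S : Finset ι} {i : ι} (hi : i ∉ S)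
    (x : EuclideanSpace 𝕜 ι) : restrictCoords S x i = 0 :=
  Set.indicator_of_notMem (mt mem_coe.1 hi) _

theorem restrictCoords_empty (x : EuclideanSpace 𝕜 ι) : restrictCoords ∅ x = 0 := by
  simp only [restrictCoords, coe_empty, Set.indicator_empty', WithLp.toLp_zero]

theorem restrictCoords_union [DecidableEq ι] {S T : Finset ι} (hST : Disjoint S T)
    (x : EuclideanSpace 𝕜 ι) :
    restrictCoords (S ∪ T) x = restrictCoords S x + restrictCoords T x := by
  simp only [restrictCoords, coe_union, Set.indicator_union_of_disjoint (disjoint_coe.2 hST),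
    ← WithLp.toLp_add]
  rfl

theorem sum_restrictCoords_parts [DecidableEq ι] {S : Finset ι} (P : Finpartition S)
    (x : EuclideanSpace 𝕜 ι) :
    ∑ T ∈ P.parts, restrictCoords T x = restrictCoords S x := by
  ext i
  rw [WithLp.ofLp_sum, Finset.sum_apply]
  by_cases hi : i ∈ S
  · obtain ⟨T, hT, hiT⟩ := P.exists_mem hi
    rw [sum_eq_single_of_mem T hT, restrictCoords_apply_of_mem hiT, restrictCoords_apply_of_mem hi]
    intro U hU hUT
    exact restrictCoords_apply_of_notMem (fun hiU ↦ hUT (P.eq_of_mem_parts hU hT hiU hiT)) x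
  · rw [restrictCoords_apply_of_notMem hi]
    exact sum_eq_zero fun T hT ↦ restrictCoords_apply_of_notMem (fun hiT ↦ hi (P.subset hT hiT)) x

/-- `x` is `k`-sparse: it vanishes off some set of at most `k` coordinates. Unlike a count of the
nonzero entries, this needs no decidability of `x i = 0`. -/
def IsSparse (k : ℕ) (x : EuclideanSpace 𝕜 ι) : Prop :=
  ∃ S : Finset ι, #S ≤ k ∧ ∀ i ∉ S, x i = 0

namespace IsSparse

theorem add {k l : ℕ} {x y : EuclideanSpace 𝕜 ι} (hx : IsSparse k x)
    (hy : IsSparse l y) : IsSparse (k + l) (x + y) := by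
  classical
  obtain ⟨S, hS, hxS⟩ := hx
  obtain ⟨T, hT, hyT⟩ := hy
  refine ⟨S ∪ T, (card_union_le S T).trans (add_le_add hS hT), fun i hi ↦ ?_⟩
  rw [notMem_union] at hi
  rw [PiLp.add_apply, hxS i hi.1, hyT i hi.2, add_zero]

theorem smul {k : ℕ} {x : EuclideanSpace 𝕜 ι} (hx : IsSparse k x) (c : 𝕜) :
    IsSparse k (c • x) := by
  obtain ⟨S, hS, hxS⟩ := hx
  exact ⟨S, hS, fun i hi ↦ by rw [PiLp.smul_apply, hxS i hi, smul_zero]⟩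

theorem neg {k : ℕ} {x : EuclideanSpace 𝕜 ι} (hx : IsSparse k x) : IsSparse k (-x) := by
  simpa only [neg_one_smul] using hx.smul (-1)

end IsSparse

theorem isSparse_restrictCoords {S : Finset ι} {k : ℕ} (hS : #S ≤ k) (x : EuclideanSpace 𝕜 ι) :
    IsSparse k (restrictCoords S x) :=
  ⟨S, hS, fun _ hi ↦ restrictCoords_apply_of_notMem hi x⟩

section

variable [Fintype ι]

theorem norm_sq_restrictCoords (S : Finset ι) (x : EuclideanSpace 𝕜 ι) :
    ‖restrictCoords S x‖ ^ 2 = ∑ i ∈ S, ‖x i‖ ^ 2 := by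
  rw [EuclideanSpace.norm_sq_eq, ← sum_subset (subset_univ S)]
  · exact sum_congr rfl fun i hi ↦ by rw [restrictCoords_apply_of_mem hi]
  · intro i _ hi
    rw [restrictCoords_apply_of_notMem hi, norm_zero, sq, zero_mul]

theorem inner_restrictCoords_of_disjoint {S T : Finset ι} (hST : Disjoint S T)
    (x y : EuclideanSpace 𝕜 ι) : ⟪restrictCoords S x, restrictCoords T y⟫_𝕜 = 0 := by
  rw [PiLp.inner_apply]
  refine sum_eq_zero fun i _ ↦ ?_
  by_cases hi : i ∈ S
  · rw [restrictCoords_apply_of_notMem (disjoint_left.1 hST hi), inner_zero_right]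
  · rw [restrictCoords_apply_of_notMem hi, inner_zero_left]

theorem sum_norm_le_sqrt_mul_norm_restrictCoords {S : Finset ι} {k : ℕ} (hS : #S ≤ k)
    (x : EuclideanSpace 𝕜 ι) : ∑ i ∈ S, ‖x i‖ ≤ √k * ‖restrictCoords S x‖ := by
  refine le_of_sq_le_sq ?_ (by positivity)
  calc (∑ i ∈ S, ‖x i‖) ^ 2 ≤ #S * ∑ i ∈ S, ‖x i‖ ^ 2 := sq_sum_le_card_mul_sum_sq
    _ ≤ k * ∑ i ∈ S, ‖x i‖ ^ 2 := by gcongr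
    _ = (√k * ‖restrictCoords S x‖) ^ 2 := by
      rw [mul_pow, Real.sq_sqrt k.cast_nonneg, norm_sq_restrictCoords]

theorem norm_restrictCoords_le_sqrt_mul {S : Finset ι} {k : ℕ} (hS : #S ≤ k)
    {x : EuclideanSpace 𝕜 ι} {c : ℝ} (hc : 0 ≤ c) (hx : ∀ i ∈ S, ‖x i‖ ≤ c) :
    ‖restrictCoords S x‖ ≤ √k * c := by
  refine le_of_sq_le_sq ?_ (by positivity)
  calc ‖restrictCoords S x‖ ^ 2 = ∑ i ∈ S, ‖x i‖ ^ 2 := norm_sq_restrictCoords S x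
    _ ≤ ∑ _i ∈ S, c ^ 2 := sum_le_sum fun i hi ↦ by gcongr; exact hx i hi
    _ = #S * c ^ 2 := by rw [sum_const, nsmul_eq_mul]
    _ ≤ k * c ^ 2 := by gcongr
    _ = (√k * c) ^ 2 := by rw [mul_pow, Real.sq_sqrt k.cast_nonneg]

theorem norm_restrictCoords_le_sum_div_sqrt {B T : Finset ι} {k : ℕ} (hk : 0 < k) (hB : #B = k)
    (hT : #T ≤ k) {x : EuclideanSpace 𝕜 ι} (hle : ∀ i ∈ B, ∀ j ∈ T, ‖x j‖ ≤ ‖x i‖) :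
    ‖restrictCoords T x‖ ≤ (∑ i ∈ B, ‖x i‖) / √k := by
  have hk' : (0 : ℝ) < k := Nat.cast_pos.2 hk
  have hmean : ∀ j ∈ T, ‖x j‖ ≤ (∑ i ∈ B, ‖x i‖) / k := fun j hj ↦ by
    rw [le_div_iff₀' hk', ← hB, ← nsmul_eq_mul]
    exact card_nsmul_le_sum B _ _ fun i hi ↦ hle i hi j hj
  calc ‖restrictCoords T x‖ ≤ √k * ((∑ i ∈ B, ‖x i‖) / k) :=
        norm_restrictCoords_le_sqrt_mul hT (by positivity) hmean
    _ = (∑ i ∈ B, ‖x i‖) / √k := by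
      rw [mul_div_left_comm, Real.sqrt_div_self', mul_one_div]

theorem eq_zero_of_restrictCoords_eq_zero_of_sum_compl_le [DecidableEq ι] {S : Finset ι}
    {x : EuclideanSpace 𝕜 ι} (hS : restrictCoords S x = 0)
    (hcone : ∑ i ∈ Sᶜ, ‖x i‖ ≤ ∑ i ∈ S, ‖x i‖) : x = 0 := by
  have hx : ∀ i ∈ S, ‖x i‖ = 0 := fun i hi ↦ by
    rw [← restrictCoords_apply_of_mem hi x, hS, PiLp.zero_apply, norm_zero]
  have hsum : ∑ i, ‖x i‖ = 0 := by
    refine le_antisymm ?_ (by positivity)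
    rw [← sum_add_sum_compl S]
    linarith [sum_eq_zero hx]
  ext i
  exact norm_eq_zero.1
    ((sum_eq_zero_iff_of_nonneg fun j _ ↦ norm_nonneg (x j)).1 hsum i (mem_univ i))

variable [DecidableEq ι]

theorem restrictCoords_add_restrictCoords_compl (S : Finset ι) (x : EuclideanSpace 𝕜 ι) :
    restrictCoords S x + restrictCoords Sᶜ x = x := by
  rw [← restrictCoords_union disjoint_compl_right, union_compl, restrictCoords, coe_univ,
    Set.indicator_univ]

theorem norm_sq_restrictCoords_union {S T : Finset ι} (hST : Disjoint S T)
    (x : EuclideanSpace 𝕜 ι) :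
    ‖restrictCoords (S ∪ T) x‖ ^ 2 = ‖restrictCoords S x‖ ^ 2 + ‖restrictCoords T x‖ ^ 2 := by
  simp only [norm_sq_restrictCoords, sum_union hST]

theorem exists_finpartition_sum_norm_restrictCoords_le {k : ℕ} (hk : 0 < k)
    (x : EuclideanSpace 𝕜 ι) (S : Finset ι) :
    ∃ B ⊆ S, #B = min k #S ∧
      ∃ P : Finpartition (S \ B), (∀ T ∈ P.parts, #T ≤ k) ∧
        ∑ T ∈ P.parts, ‖restrictCoords T x‖ ≤ (∑ i ∈ S, ‖x i‖) / √k := by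
  induction S using Finset.strongInduction with
  | H S ih =>
    obtain ⟨B, hBS, hB, hmax⟩ :=
      exists_subset_card_eq_forall_sdiff_le (fun i ↦ ‖x i‖) (min_le_right k #S)
    refine ⟨B, hBS, hB, ?_⟩
    rcases (S \ B).eq_empty_or_nonempty with hempty | hne
    · rw [hempty]
      exact ⟨Finpartition.empty _, by simp [Finpartition.empty], by
        simp only [Finpartition.empty, sum_empty]; positivity⟩
    have hBk : #B = k := by
      have := card_pos.2 hne
      rw [card_sdiff_of_subset hBS] at this
      omega
    have hssub : S \ B ⊂ S := sdiff_ssubset hBS (card_pos.1 (hBk ▸ hk))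
    obtain ⟨B', hB'S, hB', P, hPk, hP⟩ := ih (S \ B) hssub
    have hB'ne : B' ≠ ∅ := by
      rw [← nonempty_iff_ne_empty, ← card_pos, hB']
      exact lt_min hk (card_pos.2 hne)
    have hB'k : #B' ≤ k := hB'.trans_le (min_le_left k _)
    have hnotMem : B' ∉ P.parts := fun h ↦
      hB'ne (disjoint_self.1 (sdiff_disjoint.mono_left (P.subset h)))
    refine ⟨P.extend hB'ne sdiff_disjoint (sdiff_union_of_subset hB'S), ?_, ?_⟩
    · exact forall_mem_insert .. |>.2 ⟨hB'k, hPk⟩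
    · calc ∑ T ∈ insert B' P.parts, ‖restrictCoords T x‖
          = ‖restrictCoords B' x‖ + ∑ T ∈ P.parts, ‖restrictCoords T x‖ := sum_insert hnotMem
        _ ≤ (∑ i ∈ B, ‖x i‖) / √k + (∑ i ∈ S \ B, ‖x i‖) / √k :=
          add_le_add (norm_restrictCoords_le_sum_div_sqrt hk hBk hB'k
            fun i hi j hj ↦ hmax i hi j (hB'S hj)) hP
        _ = (∑ i ∈ S, ‖x i‖) / √k := by rw [← add_div, add_comm, sum_sdiff hBS]

end

theorem isSparse_toLp_iff_l0_le {n k : ℕ} {x : Fin n → ℝ} :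
    IsSparse k (WithLp.toLp 2 x) ↔ l0 x ≤ k := by
  constructor
  · rintro ⟨S, hS, hxS⟩
    refine (card_le_card fun i hi ↦ ?_).trans hS
    exact not_imp_comm.1 (hxS i) (mem_filter.1 hi).2
  · exact fun hx ↦ ⟨_, hx, fun i hi ↦ by simpa using hi⟩

variable [Fintype ι] [SeminormedAddCommGroup E] [InnerProductSpace 𝕜 E]

/-- The restricted isometry property of order `k` with constant `δ`: `A` nearly preserves the norms
of `k`-sparse vectors. The measurements may lie in any inner product space over `𝕜`. -/
def HasRIP (A : EuclideanSpace 𝕜 ι →ₗ[𝕜] E) (k : ℕ) (δ : ℝ) : Prop :=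
  ∀ x, IsSparse k x → (1 - δ) * ‖x‖ ^ 2 ≤ ‖A x‖ ^ 2 ∧ ‖A x‖ ^ 2 ≤ (1 + δ) * ‖x‖ ^ 2

theorem hasRIP_toLpLin_iff {m n : ℕ} {H : Matrix (Fin m) (Fin n) ℝ} {k : ℕ} {δ : ℝ} :
    HasRIP (H.toLpLin 2 2) k δ ↔ ∀ x : Fin n → ℝ, l0 x ≤ k →
      (1 - δ) * (x ⬝ᵥ x) ≤ (H *ᵥ x) ⬝ᵥ (H *ᵥ x) ∧
      (H *ᵥ x) ⬝ᵥ (H *ᵥ x) ≤ (1 + δ) * (x ⬝ᵥ x) := by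
  have hnorm {d : ℕ} (z : Fin d → ℝ) : ‖WithLp.toLp 2 z‖ ^ 2 = z ⬝ᵥ z := by
    rw [EuclideanSpace.real_norm_sq_eq]
    simp only [dotProduct, sq]
  simp only [HasRIP, (WithLp.toLp_surjective 2).forall, isSparse_toLp_iff_l0_le,
    toLpLin_toLp, toLin'_apply, hnorm]

namespace HasRIP

variable {A : EuclideanSpace 𝕜 ι →ₗ[𝕜] E} {k l : ℕ} {δ : ℝ} {u v x : EuclideanSpace 𝕜 ι}

theorem nonneg_of_ne_zero (hA : HasRIP A k δ) (hx : IsSparse k x) (hx0 : x ≠ 0) : 0 ≤ δ := by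
  have hpos : 0 < ‖x‖ ^ 2 := by positivity
  obtain ⟨hlower, hupper⟩ := hA x hx
  exact nonneg_of_mul_nonneg_left (show 0 ≤ δ * ‖x‖ ^ 2 by linarith) hpos

-- Polarization: `4 re ⟪A u, A v⟫ = ‖A (u + v)‖² - ‖A (u - v)‖²`.
theorem two_mul_re_inner_map_le (hA : HasRIP A (k + l) δ) (hu : IsSparse k u)
    (hv : IsSparse l v) (huv : ⟪u, v⟫_𝕜 = 0) :
    2 * RCLike.re ⟪A u, A v⟫_𝕜 ≤ δ * (‖u‖ ^ 2 + ‖v‖ ^ 2) := by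
  have hupper := (hA (u + v) (hu.add hv)).2
  have hlower := (hA (u - v) (sub_eq_add_neg u v ▸ hu.add hv.neg)).1
  rw [map_add, norm_add_sq (𝕜 := 𝕜), norm_add_sq (𝕜 := 𝕜), huv, map_zero] at hupper
  rw [map_sub, norm_sub_sq (𝕜 := 𝕜), norm_sub_sq (𝕜 := 𝕜), huv, map_zero] at hlower
  linarith

theorem re_inner_map_le (hA : HasRIP A (k + l) δ) (hu : IsSparse k u) (hv : IsSparse l v)
    (huv : ⟪u, v⟫_𝕜 = 0) : RCLike.re ⟪A u, A v⟫_𝕜 ≤ δ * (‖u‖ * ‖v‖) := by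
  rcases eq_or_ne u 0 with rfl | hu0
  · simp
  rcases eq_or_ne v 0 with rfl | hv0
  · simp
  have hpos : 0 < ‖u‖ * ‖v‖ := by positivity
  -- The scaling equalizes the two norms, turning the sum of squares into a product.
  have hscaled := hA.two_mul_re_inner_map_le (hu.smul (‖v‖ : 𝕜)) (hv.smul (‖u‖ : 𝕜))
    (by rw [inner_smul_left, inner_smul_right, huv, mul_zero, mul_zero])
  rw [map_smul, map_smul, inner_smul_left, inner_smul_right, RCLike.conj_ofReal,
    RCLike.re_ofReal_mul, RCLike.re_ofReal_mul, norm_smul, norm_smul, RCLike.norm_ofReal,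
    RCLike.norm_ofReal, abs_norm, abs_norm] at hscaled
  refine le_of_mul_le_mul_left ?_ hpos
  linarith

theorem norm_inner_map_le (hA : HasRIP A (k + l) δ) (hu : IsSparse k u) (hv : IsSparse l v)
    (huv : ⟪u, v⟫_𝕜 = 0) : ‖⟪A u, A v⟫_𝕜‖ ≤ δ * (‖u‖ * ‖v‖) := by
  obtain ⟨c, hc, hcuv⟩ := RCLike.exists_norm_eq_mul_self ⟪A u, A v⟫_𝕜
  have hrotated := hA.re_inner_map_le hu (hv.smul c) (by rw [inner_smul_right, huv, mul_zero])
  rwa [map_smul, inner_smul_right, ← hcuv, RCLike.ofReal_re, norm_smul, hc, one_mul] at hrotated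

variable [DecidableEq ι] {S B : Finset ι}

theorem norm_inner_map_restrictCoords_union_le (hA : HasRIP A (2 * k) δ) {T : Finset ι}
    (hS : #S ≤ k) (hB : #B ≤ k) (hT : #T ≤ k) (hSB : Disjoint S B) (hST : Disjoint S T)
    (hBT : Disjoint B T) (x : EuclideanSpace 𝕜 ι) :
    ‖⟪A (restrictCoords (S ∪ B) x), A (restrictCoords T x)⟫_𝕜‖ ≤
      δ * (‖restrictCoords S x‖ + ‖restrictCoords B x‖) * ‖restrictCoords T x‖ := by
  rw [two_mul] at hA
  have hTx := isSparse_restrictCoords hT x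
  have hS_inner := hA.norm_inner_map_le (isSparse_restrictCoords hS x) hTx
    (inner_restrictCoords_of_disjoint hST x x)
  have hB_inner := hA.norm_inner_map_le (isSparse_restrictCoords hB x) hTx
    (inner_restrictCoords_of_disjoint hBT x x)
  rw [restrictCoords_union hSB, map_add, inner_add_left]
  linarith [norm_add_le ⟪A (restrictCoords S x), A (restrictCoords T x)⟫_𝕜
    ⟪A (restrictCoords B x), A (restrictCoords T x)⟫_𝕜]

theorem norm_sq_map_restrictCoords_union_le (hA : HasRIP A (2 * k) δ) (hS : #S ≤ k)
    (hB : #B ≤ k) (hSB : Disjoint S B) (P : Finpartition (Sᶜ \ B))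
    (hP : ∀ T ∈ P.parts, #T ≤ k) (hx : A x = 0) :
    ‖A (restrictCoords (S ∪ B) x)‖ ^ 2 ≤
      δ * (‖restrictCoords S x‖ + ‖restrictCoords B x‖) *
        ∑ T ∈ P.parts, ‖restrictCoords T x‖ := by
  have hcompl : (S ∪ B)ᶜ = Sᶜ \ B := by rw [compl_union, sdiff_eq_inter_compl]
  have hmap : A (restrictCoords (S ∪ B) x) = -∑ T ∈ P.parts, A (restrictCoords T x) := by
    rw [← map_sum, sum_restrictCoords_parts, ← hcompl, eq_neg_iff_add_eq_zero, ← map_add,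
      restrictCoords_add_restrictCoords_compl, hx]
  have hdisj : ∀ T ∈ P.parts, Disjoint (S ∪ B) T := fun T hT ↦
    disjoint_compl_right.mono_right (hcompl ▸ P.subset hT)
  calc ‖A (restrictCoords (S ∪ B) x)‖ ^ 2
      = ‖⟪A (restrictCoords (S ∪ B) x), A (restrictCoords (S ∪ B) x)⟫_𝕜‖ := by
        rw [inner_self_eq_norm_sq_to_K, norm_pow, RCLike.norm_ofReal, abs_norm]
    _ = ‖⟪A (restrictCoords (S ∪ B) x), -∑ T ∈ P.parts, A (restrictCoords T x)⟫_𝕜‖ := by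
        rw [← hmap]
    _ = ‖∑ T ∈ P.parts, ⟪A (restrictCoords (S ∪ B) x), A (restrictCoords T x)⟫_𝕜‖ := by
        rw [inner_neg_right, norm_neg, inner_sum]
    _ ≤ ∑ T ∈ P.parts, δ * (‖restrictCoords S x‖ + ‖restrictCoords B x‖) *
          ‖restrictCoords T x‖ :=
        norm_sum_le_of_le _ fun T hT ↦
          have hST := disjoint_union_left.1 (hdisj T hT)
          hA.norm_inner_map_restrictCoords_union_le hS hB (hP T hT) hSB hST.1 hST.2 x
    _ = _ := (mul_sum ..).symm

theorem exists_norm_sq_map_restrictCoords_union_le (hA : HasRIP A (2 * k) δ) (hδ : 0 ≤ δ)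
    (hk : 0 < k) (hS : #S ≤ k) (hx : A x = 0)
    (hcone : ∑ i ∈ Sᶜ, ‖x i‖ ≤ ∑ i ∈ S, ‖x i‖) :
    ∃ B, Disjoint S B ∧ #B ≤ k ∧ ‖A (restrictCoords (S ∪ B) x)‖ ^ 2 ≤
      δ * (‖restrictCoords S x‖ + ‖restrictCoords B x‖) * ‖restrictCoords S x‖ := by
  obtain ⟨B, hBS, hB, P, hPk, hP⟩ := exists_finpartition_sum_norm_restrictCoords_le hk x Sᶜ
  have hBk : #B ≤ k := hB.trans_le (min_le_left k _)
  have hSB : Disjoint S B := disjoint_compl_right.mono_right hBS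
  have htail : ∑ T ∈ P.parts, ‖restrictCoords T x‖ ≤ ‖restrictCoords S x‖ :=
    hP.trans <| (div_le_iff₀' (by positivity)).2 <|
      hcone.trans (sum_norm_le_sqrt_mul_norm_restrictCoords hS x)
  refine ⟨B, hSB, hBk, ?_⟩
  calc ‖A (restrictCoords (S ∪ B) x)‖ ^ 2
      ≤ δ * (‖restrictCoords S x‖ + ‖restrictCoords B x‖) *
          ∑ T ∈ P.parts, ‖restrictCoords T x‖ :=
        hA.norm_sq_map_restrictCoords_union_le hS hBk hSB P hPk hx
    _ ≤ δ * (‖restrictCoords S x‖ + ‖restrictCoords B x‖) * ‖restrictCoords S x‖ := by gcongr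

theorem eq_zero_of_map_eq_zero_of_sum_compl_le (hA : HasRIP A (2 * k) δ) (hδ : δ < √2 - 1)
    (hS : #S ≤ k) (hx : A x = 0) (hcone : ∑ i ∈ Sᶜ, ‖x i‖ ≤ ∑ i ∈ S, ‖x i‖) : x = 0 := by
  by_contra hx0
  have hS0 : restrictCoords S x ≠ 0 := fun h ↦
    hx0 (eq_zero_of_restrictCoords_eq_zero_of_sum_compl_le h hcone)
  have hk : 0 < k := by
    refine (card_pos.2 (nonempty_iff_ne_empty.2 ?_)).trans_le hS
    rintro rfl
    exact hS0 (restrictCoords_empty x)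
  have hδ0 : 0 ≤ δ := hA.nonneg_of_ne_zero (isSparse_restrictCoords (by omega) x) hS0
  obtain ⟨B, hSB, hB, hupper⟩ :=
    hA.exists_norm_sq_map_restrictCoords_union_le hδ0 hk hS hx hcone
  have hlower := (hA _ (isSparse_restrictCoords ((card_union_le S B).trans (by omega)) x)).1
  set a := ‖restrictCoords S x‖
  set b := ‖restrictCoords B x‖
  rw [norm_sq_restrictCoords_union hSB] at hlower
  have hpos : 0 < a ^ 2 + b ^ 2 := by
    have : 0 < a := norm_pos_iff.2 hS0
    positivity
  have hbound : (1 - δ) * (a ^ 2 + b ^ 2) ≤ δ * √2 * (a ^ 2 + b ^ 2) :=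
    calc (1 - δ) * (a ^ 2 + b ^ 2) ≤ δ * (a + b) * a := hlower.trans hupper
      _ = δ * ((a + b) * a) := mul_assoc ..
      _ ≤ δ * (√2 * (a ^ 2 + b ^ 2)) :=
          mul_le_mul_of_nonneg_left (add_mul_self_le_sqrt_two_mul_sq_add_sq a b) hδ0
      _ = δ * √2 * (a ^ 2 + b ^ 2) := (mul_assoc ..).symm
  have hδ_lt : δ * √2 < 1 - δ := by
    have hcancel : (√2 - 1) * (√2 + 1) = 1 := by
      linarith [sub_mul (√2) 1 (√2 + 1), Real.mul_self_sqrt (zero_le_two (α := ℝ))]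
    have hscaled := mul_lt_mul_of_pos_right hδ (show 0 < √2 + 1 by positivity)
    linarith
  exact (mul_lt_mul_of_pos_right hδ_lt hpos).not_ge hbound

end HasRIP

theorem rip_l1_exact_recovery_general {A : EuclideanSpace 𝕜 ι →ₗ[𝕜] E} {k : ℕ} {δ : ℝ}
    (hA : HasRIP A (2 * k) δ) (hδ : δ < √2 - 1) {s x : EuclideanSpace 𝕜 ι} (hs : IsSparse k s)
    (hfeas : A x = A s) (hle : ∑ i, ‖x i‖ ≤ ∑ i, ‖s i‖) : x = s := by
  classical
  obtain ⟨S, hS, hsS⟩ := hs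
  exact sub_eq_zero.1 (hA.eq_zero_of_map_eq_zero_of_sum_compl_le hδ hS
    (by rw [map_sub, hfeas, sub_self]) (sum_compl_norm_sub_le_of_sum_norm_le hsS hle))

end

/-- If `H` satisfies the RIP of order `2k` with constant `δ < √2 − 1`, `s` is
`k`-sparse, and `s*` minimizes the ℓ1-norm over `{x : H x = H s}`, then `s* = s`. -/
theorem rip_l1_exact_recovery
    {m n : ℕ} (H : Matrix (Fin m) (Fin n) ℝ) (k : ℕ) (hk : 1 ≤ k)
    (δ : ℝ) (hδ0 : 0 ≤ δ) (hδ : δ < Real.sqrt 2 - 1)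
    (hRIP : ∀ x : Fin n → ℝ, l0 x ≤ 2 * k →
      (1 - δ) * (x ⬝ᵥ x) ≤ (H.mulVec x) ⬝ᵥ (H.mulVec x) ∧
      (H.mulVec x) ⬝ᵥ (H.mulVec x) ≤ (1 + δ) * (x ⬝ᵥ x))
    (s : Fin n → ℝ) (hs : l0 s ≤ k)
    (sStar : Fin n → ℝ) (hfeas : H.mulVec sStar = H.mulVec s)
    (hmin : ∀ x : Fin n → ℝ, H.mulVec x = H.mulVec s →
      (∑ i, |sStar i|) ≤ ∑ i, |x i|) :
    sStar = s := by
  exact WithLp.toLp_injective 2 <| rip_l1_exact_recovery_general (hasRIP_toLpLin_iff.2 hRIP) hδ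
    (isSparse_toLp_iff_l0_le.2 hs) (congrArg (WithLp.toLp 2) hfeas) (hmin s rfl)
end
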